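/- Let 0<q<1 and σ>0, and take γ=0 (so condition (R) holds). Then the radii of starlikeness of g_{0,σ}(·;q) and h_{0,σ}(·;q) satisfy (1+q)/(3σ²) < (r*(g_{0,σ}(·;q)))² < 3(1+q)(1+q²)(1+q+q²) / ( σ²(9q⁴+9q³+8q²+9q+9) ) and (1+q)/(2σ²) < r*(h_{0,σ}(·;q)) < (1+q)(1+q²)(1+q+q²) / ( σ²(2q⁴+2q³+q²+2q+2) ). -/

import Mathlib

noncomputable def qPochInf (a q : ℝ) : ℝ := ∏' k : ℕ, (1 - a * q ^ k)

noncomputable def qGamma (q x : ℝ) : ℝ :=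
  qPochInf q q * (1 - q) ^ (1 - x) / qPochInf (q ^ x) q

noncomputable def qML (γ σ q : ℝ) (z : ℂ) : ℂ :=
  ∑' n : ℕ,
    (((-1) ^ n * σ ^ (2 * n) * q ^ (n * (n - 1)) / qGamma q (2 * n + γ + 1) : ℝ) : ℂ) * z ^ (2 * n)

noncomputable def qMLR (γ σ q : ℝ) (x : ℝ) : ℝ :=
  ∑' n : ℕ,
    ((-1) ^ n * σ ^ (2 * n) * q ^ (n * (n - 1)) / qGamma q (2 * n + γ + 1)) * x ^ (2 * n)

def condR (q γ : ℝ) : Prop :=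
  (γ = 0 ∨ γ = 1) ∨
    (γ ∈ Set.Ioo (0 : ℝ) 2 ∧ γ ≠ 1 ∧
      1 < q⁻¹ * (1 - q) * (1 - q ^ (γ + 1)) * (1 - q ^ (γ + 2)))

noncomputable def radiusStarlike (α : ℝ) (f : ℂ → ℂ) : ℝ :=
  sSup {r : ℝ | 0 < r ∧ ∀ z : ℂ, 0 < ‖z‖ → ‖z‖ < r →
    α < (z * deriv f z / f z).re}

noncomputable def radiusConvex (α : ℝ) (f : ℂ → ℂ) : ℝ :=
  sSup {r : ℝ | 0 < r ∧ ∀ z : ℂ, ‖z‖ < r →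
    α < (1 + z * deriv (deriv f) z / deriv f z).re}

noncomputable def fML (γ σ q : ℝ) (z : ℂ) : ℂ :=
  Complex.exp ((1 / ((γ : ℂ) + 1)) *
    Complex.log (z ^ ((γ : ℂ) + 1) * (qGamma q (γ + 1) : ℂ) * qML γ σ q z))

noncomputable def gML (γ σ q : ℝ) (z : ℂ) : ℂ :=
  z * (qGamma q (γ + 1) : ℂ) * qML γ σ q z

noncomputable def hML (γ σ q : ℝ) (z : ℂ) : ℂ :=
  z * (qGamma q (γ + 1) : ℂ) *
    ∑' n : ℕ,
      (((-1) ^ n * σ ^ (2 * n) * q ^ (n * (n - 1)) / qGamma q (2 * n + γ + 1) : ℝ) : ℂ) * z ^ n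

noncomputable def hMLR (γ σ q : ℝ) (x : ℝ) : ℝ :=
  x * qGamma q (γ + 1) *
    ∑' n : ℕ,
      ((-1) ^ n * σ ^ (2 * n) * q ^ (n * (n - 1)) / qGamma q (2 * n + γ + 1)) * x ^ n

/-- Normalized function $g_{0,σ}(z;q) = z·λ_{0,σ}(z;q)$ (using $Γ_q(1)=1$). -/
noncomputable def gML0 (σ q : ℝ) (z : ℂ) : ℂ := z * qML 0 σ q z

/-- Normalized function $h_{0,σ}(z;q)$ (using $Γ_q(1)=1$). -/
noncomputable def hML0 (σ q : ℝ) (z : ℂ) : ℂ :=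
  z * ∑' n : ℕ,
    (((-1) ^ n * σ ^ (2 * n) * q ^ (n * (n - 1)) / qGamma q (2 * n + 1) : ℝ) : ℂ) * z ^ n

/-!
With `u = s * z ^ m` and `s = σ ^ 2 / (1 + q)`, both functions are `z * F(u)` (for `m = 2` and
`m = 1`) with the same `F(u) = 1 - u + b₂ u² - ⋯`, so that `z f' / f = 1 + m u F'(u) / F(u)`. AM–GM
on the `q`-integers gives `bₙ₊₁ ≤ bₙ / ((2 n + 1) (n + 1))`; the coefficients thus decrease so fast
that on `|u| ≤ 2 / 3` the quadratic jet of `F` governs both bounds. For the lower one,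
`m |u F'(u)| < |F(u)|` holds on a disc of radius slightly larger than `1 / (1 + m)`. For the upper
one, `z f' / f` is already nonpositive at a real point slightly below
`(1 + m) / ((1 + m)² - 2 (1 + 2 m) b₂)`, which is the quotient of the first two Euler–Rayleigh sums
of `F + m u F'` over its zeros.
-/

open Finset Metric

section RadiusStarlike

variable {α : ℝ} {f F : ℂ → ℂ} {m : ℕ} {s : ℝ} {z : ℂ}

lemma radiusStarlike_le (hz : z ≠ 0) (hα : (z * deriv f z / f z).re ≤ α) :
    radiusStarlike α f ≤ ‖z‖ := by
  refine Real.sSup_le (fun r ⟨_, hr⟩ => ?_) (norm_nonneg z)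
  by_contra! hzr
  exact (hr z (norm_pos_iff.mpr hz) hzr).not_ge hα

lemma le_radiusStarlike {r : ℝ} (hr : 0 < r) (hz : z ≠ 0) (hα : (z * deriv f z / f z).re ≤ α)
    (hf : ∀ w, w ≠ 0 → ‖w‖ < r → α < (w * deriv f w / f w).re) :
    r ≤ radiusStarlike α f := by
  refine le_csSup ⟨‖z‖, fun t ⟨_, ht⟩ => ?_⟩ ⟨hr, fun w hw hwr => hf w (norm_pos_iff.mp hw) hwr⟩
  by_contra! hzt
  exact (ht z (norm_pos_iff.mpr hz) hzt).not_ge hα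

lemma mul_deriv_div_self_mul_comp_pow (hz : z ≠ 0) (hF : DifferentiableAt ℂ F (s * z ^ m))
    (hF0 : F (s * z ^ m) ≠ 0) :
    z * deriv (fun z => z * F (s * z ^ m)) z / (z * F (s * z ^ m)) =
      1 + m * (s * z ^ m * deriv F (s * z ^ m) / F (s * z ^ m)) := by
  have inner : HasDerivAt (fun z : ℂ => (s * z ^ m : ℂ)) (s * (m * z ^ (m - 1))) z :=
    (hasDerivAt_pow m z).const_mul _
  have outer := (hasDerivAt_id z).fun_mul (hF.hasDerivAt.comp z inner)
  have hpow : (m : ℂ) * z ^ m = m * z ^ (m - 1) * z := by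
    rcases m with _ | m
    · simp
    · rw [Nat.add_sub_cancel, pow_succ, mul_assoc]
  have hderiv : deriv (fun z => z * F (s * z ^ m)) z =
      F (s * z ^ m) + m * (s * z ^ m * deriv F (s * z ^ m)) := by
    refine outer.deriv.trans ?_
    simp only [id, Function.comp]
    linear_combination (-s * deriv F (s * z ^ m)) * hpow
  rw [hderiv]
  field_simp

lemma exists_pos_mul_pow_eq (hs : 0 < s) (hm : m ≠ 0) {ρ : ℝ} (hρ : 0 < ρ) :
    ∃ r : ℝ, 0 < r ∧ s * r ^ m = ρ := by
  refine ⟨(ρ / s) ^ (m⁻¹ : ℝ), by positivity, ?_⟩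
  rw [Real.rpow_inv_natCast_pow (by positivity) hm, mul_div_cancel₀ _ hs.ne']

lemma norm_ofReal_mul_pow (hs : 0 ≤ s) (m : ℕ) (z : ℂ) : ‖(s * z ^ m : ℂ)‖ = s * ‖z‖ ^ m := by
  rw [norm_mul, norm_pow, Complex.norm_of_nonneg hs]

lemma radiusStarlike_mul_comp_pow_mem_Icc (hs : 0 < s) (hm : m ≠ 0) {ρ x : ℝ} (hρ : 0 < ρ)
    (hF : ∀ u : ℂ, ‖u‖ < ρ →
      DifferentiableAt ℂ F u ∧ F u ≠ 0 ∧ α < (1 + m * (u * deriv F u / F u)).re)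
    (hx : 0 < x) (hFx : DifferentiableAt ℂ F x) (hFx0 : F x ≠ 0)
    (hαx : (1 + m * (x * deriv F x / F x)).re ≤ α) :
    s * radiusStarlike α (fun z => z * F (s * z ^ m)) ^ m ∈ Set.Icc ρ x := by
  obtain ⟨r, hr, rfl⟩ := exists_pos_mul_pow_eq hs hm hρ
  obtain ⟨t, ht, rfl⟩ := exists_pos_mul_pow_eq hs hm hx
  have ht0 : (t : ℂ) ≠ 0 := mod_cast ht.ne'
  push_cast at hFx hFx0 hαx
  rw [← mul_deriv_div_self_mul_comp_pow ht0 hFx hFx0] at hαx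
  have lower : r ≤ radiusStarlike α (fun z => z * F (s * z ^ m)) := by
    refine le_radiusStarlike hr ht0 hαx fun w hw hwr => ?_
    obtain ⟨hFw, hFw0, hαw⟩ := hF (s * w ^ m) (by rw [norm_ofReal_mul_pow hs.le]; gcongr)
    rwa [mul_deriv_div_self_mul_comp_pow hw hFw hFw0]
  have upper := radiusStarlike_le ht0 hαx
  rw [Complex.norm_of_nonneg ht.le] at upper
  have radius_nonneg := hr.le.trans lower
  exact ⟨by gcongr, by gcongr⟩

end RadiusStarlike

section AltPowerSeries

/-- The alternating power series `∑ (-1)ⁿ cₙ uⁿ`. The signs are split off because the series of the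
theorem have positive `cₙ`, so that `u` near the positive axis is the critical direction. -/
noncomputable def altPowerSeries (c : ℕ → ℝ) (u : ℂ) : ℂ :=
  ∑' n : ℕ, ((-1) ^ n * c n : ℝ) * u ^ n

variable {c : ℕ → ℝ} {u : ℂ}

lemma norm_altPowerSeries_term (c : ℕ → ℝ) (u : ℂ) (n : ℕ) :
    ‖(((-1) ^ n * c n : ℝ) * u ^ n : ℂ)‖ = |c n| * ‖u‖ ^ n := by
  rw [norm_mul, norm_pow, Complex.norm_real, Real.norm_eq_abs, abs_mul, abs_neg_one_pow, one_mul]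

lemma altPowerSeries_ofReal_im (c : ℕ → ℝ) (x : ℝ) : (altPowerSeries c x).im = 0 := by
  have hreal : altPowerSeries c x = ((∑' n : ℕ, (-1) ^ n * c n * x ^ n : ℝ) : ℂ) := by
    simp only [altPowerSeries, Complex.ofReal_tsum, Complex.ofReal_mul, Complex.ofReal_pow]
  rw [hreal, Complex.ofReal_im]

lemma norm_altPowerSeries_term_le (c : ℕ → ℝ) {R : ℝ} (n : ℕ) (hu : u ∈ ball 0 R) :
    ‖(((-1) ^ n * c n : ℝ) * u ^ n : ℂ)‖ ≤ |c n| * R ^ n := by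
  rw [norm_altPowerSeries_term]
  gcongr
  exact (mem_ball_zero_iff.mp hu).le

section Derivative

variable {R : ℝ} (hc : Summable fun n => |c n| * R ^ n)
include hc

lemma differentiableAt_altPowerSeries (hu : ‖u‖ < R) :
    DifferentiableAt ℂ (altPowerSeries c) u :=
  (Complex.differentiableOn_tsum_of_summable_norm hc (fun n => by fun_prop) isOpen_ball
    fun n w hw => norm_altPowerSeries_term_le c n hw).differentiableAt
      (isOpen_ball.mem_nhds (mem_ball_zero_iff.mpr hu))

lemma mul_deriv_altPowerSeries (hu : ‖u‖ < R) :
    u * deriv (altPowerSeries c) u = altPowerSeries (fun n => n * c n) u := by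
  have hderiv := Complex.hasSum_deriv_of_summable_norm hc
    (F := fun n w => (((-1) ^ n * c n : ℝ) : ℂ) * w ^ n) (fun n => by fun_prop) isOpen_ball
    (fun n w hw => norm_altPowerSeries_term_le c n hw) (mem_ball_zero_iff.mpr hu)
  refine (hderiv.mul_left u).tsum_eq.symm.trans (tsum_congr fun n => ?_)
  rcases n with _ | n
  · simp
  · simp
    ring

end Derivative

lemma norm_tsum_sub_sum_range_le_of_ratio {E : Type*} [NormedAddCommGroup E] [CompleteSpace E]
    {f : ℕ → E} {θ : ℝ} (hθ0 : 0 ≤ θ) (hθ1 : θ < 1) {k : ℕ}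
    (hf : ∀ n, k ≤ n → ‖f (n + 1)‖ ≤ θ * ‖f n‖) :
    ‖∑' n, f n - ∑ n ∈ range k, f n‖ ≤ ‖f k‖ / (1 - θ) := by
  have hsummable : Summable f :=
    summable_of_ratio_norm_eventually_le hθ1 (Filter.eventually_atTop.mpr ⟨k, hf⟩)
  have hgeom (n : ℕ) : ‖f (n + k)‖ ≤ ‖f k‖ * θ ^ n := by
    induction n with
    | zero => simp
    | succ n ih =>
      calc ‖f (n + 1 + k)‖ = ‖f (n + k + 1)‖ := by rw [add_right_comm]
        _ ≤ θ * ‖f (n + k)‖ := hf _ (by lia)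
        _ ≤ θ * (‖f k‖ * θ ^ n) := by gcongr
        _ = ‖f k‖ * θ ^ (n + 1) := by ring
  rw [← hsummable.sum_add_tsum_nat_add k, add_sub_cancel_left, div_eq_mul_inv]
  exact tsum_of_norm_bounded ((hasSum_geometric_of_lt_one hθ0 hθ1).mul_left _) hgeom

lemma norm_altPowerSeries_sub_sum_range_le {θ : ℝ} (hθ : 0 ≤ θ) {k : ℕ}
    (hc : ∀ n, k ≤ n → |c (n + 1)| ≤ θ * |c n|) (hu : θ * ‖u‖ < 1) :
    ‖altPowerSeries c u - ∑ n ∈ range k, ((-1) ^ n * c n : ℝ) * u ^ n‖ ≤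
      |c k| * ‖u‖ ^ k / (1 - θ * ‖u‖) := by
  rw [← norm_altPowerSeries_term]
  refine norm_tsum_sub_sum_range_le_of_ratio (by positivity) hu fun n hn => ?_
  rw [norm_altPowerSeries_term, norm_altPowerSeries_term]
  calc |c (n + 1)| * ‖u‖ ^ (n + 1) ≤ θ * |c n| * ‖u‖ ^ (n + 1) := by
        gcongr
        exact hc n hn
    _ = θ * ‖u‖ * (|c n| * ‖u‖ ^ n) := by ring

end AltPowerSeries

/-- Normalised positive coefficients decaying from the first one on at least like `6⁻ⁿ`. The series
of the theorem is `altPowerSeries b` for such a `b`, up to a rescaling of its argument. -/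
structure IsRapidlyDecaying (b : ℕ → ℝ) : Prop where
  zero : b 0 = 1
  one : b 1 = 1
  pos : ∀ n, 0 < b n
  succ_le : ∀ n, 1 ≤ n → b (n + 1) ≤ b n / 6

namespace IsRapidlyDecaying

variable {b : ℕ → ℝ} {u : ℂ} (hb : IsRapidlyDecaying b)
include hb

lemma two_le : b 2 ≤ 1 / 6 := by
  simpa [hb.one] using hb.succ_le 1 le_rfl

lemma summable : Summable fun n => |b n| * 1 ^ n := by
  refine summable_of_ratio_norm_eventually_le (r := 1 / 6) (by norm_num)
    (Filter.eventually_atTop.mpr ⟨1, fun n hn => ?_⟩)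
  have := hb.succ_le n hn
  simp only [one_pow, mul_one, Real.norm_eq_abs, abs_of_pos (hb.pos _)]
  linarith

lemma norm_altPowerSeries_sub_jet_le (hu : ‖u‖ ≤ 2 / 3) :
    ‖altPowerSeries b u - (1 - u + b 2 * u ^ 2)‖ ≤ 1 / 5 * (b 2 * ‖u‖ ^ 3) := by
  have hratio (n : ℕ) (hn : 3 ≤ n) : |b (n + 1)| ≤ 1 / 6 * |b n| := by
    rw [abs_of_pos (hb.pos _), abs_of_pos (hb.pos _)]
    linarith [hb.succ_le n (by lia)]
  have htail := norm_altPowerSeries_sub_sum_range_le (by norm_num) hratio (u := u) (by linarith)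
  have hjet : ∑ n ∈ range 3, (((-1) ^ n * b n : ℝ) : ℂ) * u ^ n = 1 - u + b 2 * u ^ 2 := by
    simp [sum_range_succ, hb.zero, hb.one, sub_eq_add_neg]
  rw [hjet, abs_of_pos (hb.pos 3)] at htail
  calc _ ≤ b 3 * ‖u‖ ^ 3 / (1 - 1 / 6 * ‖u‖) := htail
    _ ≤ b 2 / 6 * ‖u‖ ^ 3 / (8 / 9) := by
        have := hb.succ_le 2 (by norm_num)
        have := hb.pos 2
        gcongr
        linarith
    _ ≤ _ := by
        have : 0 ≤ b 2 * ‖u‖ ^ 3 := mul_nonneg (hb.pos 2).le (by positivity)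
        linarith

lemma norm_mul_deriv_altPowerSeries_sub_jet_le (hu : ‖u‖ ≤ 2 / 3) :
    ‖u * deriv (altPowerSeries b) u - (-u + 2 * b 2 * u ^ 2)‖ ≤ 3 / 5 * (b 2 * ‖u‖ ^ 3) := by
  have hratio (n : ℕ) (hn : 3 ≤ n) : |((n + 1 : ℕ) : ℝ) * b (n + 1)| ≤ 2 / 9 * |n * b n| := by
    have hn' : (3 : ℝ) ≤ n := mod_cast hn
    have hle := hb.succ_le n (by lia)
    have hpos := hb.pos n
    rw [abs_of_pos (mul_pos (by positivity) (hb.pos _)), abs_of_pos (by positivity)]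
    calc ((n + 1 : ℕ) : ℝ) * b (n + 1) ≤ (n + 1 : ℕ) * (b n / 6) := by gcongr
      _ ≤ 4 / 3 * n * (b n / 6) := by
          gcongr
          push_cast
          linarith
      _ = _ := by ring
  have htail := norm_altPowerSeries_sub_sum_range_le (c := fun n => n * b n) (by norm_num) hratio
    (u := u) (by linarith)
  have hjet : ∑ n ∈ range 3, (((-1) ^ n * (n * b n) : ℝ) : ℂ) * u ^ n =
      -u + 2 * b 2 * u ^ 2 := by
    simp [sum_range_succ, hb.one]
  rw [hjet, ← mul_deriv_altPowerSeries hb.summable (by linarith),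
    abs_of_pos (mul_pos (by norm_num) (hb.pos 3))] at htail
  calc _ ≤ (3 : ℕ) * b 3 * ‖u‖ ^ 3 / (1 - 2 / 9 * ‖u‖) := htail
    _ ≤ (3 : ℕ) * (b 2 / 6) * ‖u‖ ^ 3 / (23 / 27) := by
        have := hb.succ_le 2 (by norm_num)
        have := hb.pos 2
        gcongr
        linarith
    _ ≤ _ := by
        have : 0 ≤ b 2 * ‖u‖ ^ 3 := mul_nonneg (hb.pos 2).le (by positivity)
        push_cast
        linarith

end IsRapidlyDecaying

section JetInequalities

variable {m β r : ℝ}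

lemma lower_jet_inequality (hm : 1 ≤ m) (hβ0 : 0 < β) (hβ : β ≤ 1 / 6) (hr0 : 0 ≤ r)
    (hr : (1 + m - β / 2) * r < 1) :
    m * (r + 4 * β ^ 2 * r ^ 3) + (1 + 2 * β * r) * ((1 + 3 * m) / 5 * (β * r ^ 3)) <
      1 - (1 - 2 * β) * r - β * r ^ 2 - 2 * β ^ 2 * r ^ 3 := by
  have hr' : r ≤ 12 / 23 := by nlinarith
  have hmr : m * r ≤ 1 := by nlinarith
  have hβr : β * r ≤ 2 / 23 := by nlinarith
  have hmr2 : (1 + 3 * m) * r ^ 2 ≤ 15 / 8 := by nlinarith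
  have curvature : 4 * β * (m * r) * r ≤ 4 * (2 / 23) := by
    calc 4 * β * (m * r) * r = 4 * (β * r * (m * r)) := by ring
      _ ≤ 4 * (2 / 23 * 1) := by gcongr
      _ = 4 * (2 / 23) := by ring
  have tail : (1 + 2 * β * r) * ((1 + 3 * m) * r ^ 2) ≤ (1 + 4 / 23) * (15 / 8) := by
    gcongr
    linarith
  have gain : 0 ≤ β * r * (3 / 2 - r - 2 * β * r ^ 2 - 4 * β * (m * r) * r
      - (1 + 2 * β * r) * ((1 + 3 * m) * r ^ 2) / 5) := by
    have : β * r ^ 2 ≤ 2 / 23 * (12 / 23) := by nlinarith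
    apply mul_nonneg (by positivity)
    linarith
  linarith

/-- A point slightly below `(1 + m) / ((1 + m) ^ 2 - 2 * (1 + 2 * m) * β)`, at which starlikeness
already fails. With `2` in place of `7 / 4` it would be that bound itself; `7 / 4` is small enough
to make the bound strict and large enough to absorb the cubic remainder of the series. -/
noncomputable def testPoint (m β : ℝ) : ℝ := (1 + m) / ((1 + m) ^ 2 - 7 / 4 * (1 + 2 * m) * β)

lemma testPoint_denom_ge (hm : 1 ≤ m) (hβ : β ≤ 1 / 6) :
    25 / 32 * (1 + m) ^ 2 ≤ (1 + m) ^ 2 - 7 / 4 * (1 + 2 * m) * β := by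
  nlinarith

lemma testPoint_pos (hm : 1 ≤ m) (hβ : β ≤ 1 / 6) : 0 < testPoint m β :=
  div_pos (by linarith) ((by positivity : 0 < 25 / 32 * (1 + m) ^ 2).trans_le
    (testPoint_denom_ge hm hβ))

lemma one_add_mul_testPoint_le (hm : 1 ≤ m) (hβ : β ≤ 1 / 6) :
    (1 + m) * testPoint m β ≤ 32 / 25 := by
  have hdenom := testPoint_denom_ge hm hβ
  rw [testPoint, mul_div_assoc', div_le_iff₀ (by nlinarith)]
  linarith

lemma testPoint_le (hm : 1 ≤ m) (hβ : β ≤ 1 / 6) : testPoint m β ≤ 2 / 3 := by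
  nlinarith [one_add_mul_testPoint_le hm hβ, testPoint_pos hm hβ]

lemma testPoint_lt (hm : 1 ≤ m) (hβ0 : 0 < β) (hβ : β ≤ 1 / 6) :
    testPoint m β < (1 + m) / ((1 + m) ^ 2 - 2 * (1 + 2 * m) * β) := by
  have : 0 < (1 + 2 * m) * β := by positivity
  unfold testPoint
  gcongr
  · nlinarith
  · norm_num

lemma upper_jet_inequality (hm : 1 ≤ m) (hβ0 : 0 < β) (hβ : β ≤ 1 / 6) :
    1 - (1 + m) * testPoint m β + (1 + 2 * m) * β * testPoint m β ^ 2 +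
      (1 + 3 * m) / 5 * (β * testPoint m β ^ 3) ≤ 0 := by
  have hx0 := testPoint_pos hm hβ
  have hx := testPoint_le hm hβ
  have hy := one_add_mul_testPoint_le hm hβ
  have hdef : testPoint m β * ((1 + m) ^ 2 - 7 / 4 * (1 + 2 * m) * β) = 1 + m :=
    div_mul_cancel₀ _ (by nlinarith [testPoint_denom_ge hm hβ])
  generalize testPoint m β = x at *
  have bracket : (1 + 2 * m) * ((1 + m) * x - 7 / 4) + (1 + 3 * m) / 5 * (x * ((1 + m) * x)) ≤
      0 := by
    have : x * ((1 + m) * x) ≤ 2 / 3 * (32 / 25) := by gcongr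
    nlinarith
  refine nonpos_of_mul_nonpos_right (a := 1 + m) ?_ (by linarith)
  calc (1 + m) * (1 - (1 + m) * x + (1 + 2 * m) * β * x ^ 2 + (1 + 3 * m) / 5 * (β * x ^ 3))
      = β * x * ((1 + 2 * m) * ((1 + m) * x - 7 / 4) +
          (1 + 3 * m) / 5 * (x * ((1 + m) * x))) := by
        linear_combination -hdef
    _ ≤ 0 := mul_nonpos_of_nonneg_of_nonpos (by positivity) bracket

/-- Multiplication by `1 + 2βu` removes the quadratic term of `-u + 2βu²` and shrinks the linear
coefficient of `1 - u + βu²` to `1 - 2β`; this gain pays for all the losses in the triangle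
inequality. -/
lemma mul_norm_derivJet_add_cubic_lt_norm_jet (hm : 1 ≤ m) (hβ0 : 0 < β) (hβ : β ≤ 1 / 6) {u : ℂ}
    (hu : (1 + m - β / 2) * ‖u‖ < 1) :
    m * ‖-u + 2 * β * u ^ 2‖ + (1 + 3 * m) / 5 * (β * ‖u‖ ^ 3) < ‖1 - u + β * u ^ 2‖ := by
  set r := ‖u‖ with hr
  have hr0 : 0 ≤ r := norm_nonneg u
  have hmultiplier : ‖1 + 2 * β * u‖ ≤ 1 + 2 * β * r := by
    refine (norm_add_le _ _).trans_eq ?_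
    simp [abs_of_pos hβ0, hr]
  have hlinear : ‖1 + 2 * β * u‖ * ‖-u + 2 * β * u ^ 2‖ ≤ r + 4 * β ^ 2 * r ^ 3 := by
    rw [← norm_mul, show (1 + 2 * β * u) * (-u + 2 * β * u ^ 2) = -u + (4 * β ^ 2 : ℝ) * u ^ 3 by
      push_cast; ring]
    refine (norm_add_le _ _).trans_eq ?_
    rw [norm_neg, norm_mul, norm_pow, Complex.norm_of_nonneg (by positivity)]
  have hconst : 1 - (1 - 2 * β) * r - β * r ^ 2 - 2 * β ^ 2 * r ^ 3 ≤
      ‖1 + 2 * β * u‖ * ‖1 - u + β * u ^ 2‖ := by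
    have hexpand : (1 : ℂ) = (1 + 2 * β * u) * (1 - u + β * u ^ 2) + (1 - 2 * β : ℝ) * u +
        β * u ^ 2 + (-(2 * β ^ 2 : ℝ)) * u ^ 3 := by
      push_cast; ring
    have htriangle := norm_add₄_le (a := (1 + 2 * β * u) * (1 - u + β * u ^ 2))
      (b := (1 - 2 * β : ℝ) * u) (c := β * u ^ 2) (d := (-(2 * β ^ 2 : ℝ)) * u ^ 3)
    rw [← hexpand, norm_one, norm_mul, norm_mul, norm_mul, norm_mul, norm_neg, norm_pow, norm_pow,
      Complex.norm_of_nonneg (by linarith), Complex.norm_of_nonneg hβ0.le,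
      Complex.norm_of_nonneg (by positivity), ← hr] at htriangle
    linarith
  have hreal := lower_jet_inequality hm hβ0 hβ hr0 hu
  refine lt_of_mul_lt_mul_left ?_ (norm_nonneg (1 + 2 * β * u))
  calc ‖1 + 2 * β * u‖ * (m * ‖-u + 2 * β * u ^ 2‖ + (1 + 3 * m) / 5 * (β * r ^ 3))
      = m * (‖1 + 2 * β * u‖ * ‖-u + 2 * β * u ^ 2‖) +
          ‖1 + 2 * β * u‖ * ((1 + 3 * m) / 5 * (β * r ^ 3)) := by ring
    _ ≤ m * (r + 4 * β ^ 2 * r ^ 3) + (1 + 2 * β * r) * ((1 + 3 * m) / 5 * (β * r ^ 3)) := by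
        gcongr
    _ < _ := hreal.trans_le hconst

end JetInequalities

namespace IsRapidlyDecaying

variable {b : ℕ → ℝ} {m : ℕ} (hb : IsRapidlyDecaying b)
include hb

lemma mul_norm_mul_deriv_lt (hm : m ≠ 0) {u : ℂ} (hu : ‖u‖ < 1 / (1 + m - b 2 / 2)) :
    m * ‖u * deriv (altPowerSeries b) u‖ < ‖altPowerSeries b u‖ := by
  have hm1 : (1 : ℝ) ≤ m := mod_cast Nat.one_le_iff_ne_zero.mpr hm
  have hβ := hb.two_le
  rw [lt_div_iff₀' (by linarith)] at hu
  have hu' : ‖u‖ ≤ 2 / 3 := by nlinarith [norm_nonneg u]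
  have hF := norm_sub_norm_le (1 - u + b 2 * u ^ 2) (altPowerSeries b u)
  rw [norm_sub_rev] at hF
  have hE := norm_le_norm_add_norm_sub (-u + 2 * b 2 * u ^ 2) (u * deriv (altPowerSeries b) u)
  have hF' := hb.norm_altPowerSeries_sub_jet_le hu'
  have hE' := hb.norm_mul_deriv_altPowerSeries_sub_jet_le hu'
  have hjets := mul_norm_derivJet_add_cubic_lt_norm_jet hm1 (hb.pos 2) hβ hu
  calc m * ‖u * deriv (altPowerSeries b) u‖
      ≤ m * (‖-u + 2 * b 2 * u ^ 2‖ + 3 / 5 * (b 2 * ‖u‖ ^ 3)) := by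
        gcongr
        rw [norm_sub_rev] at hE'
        linarith
    _ < ‖1 - u + b 2 * u ^ 2‖ - 1 / 5 * (b 2 * ‖u‖ ^ 3) := by linarith
    _ ≤ ‖altPowerSeries b u‖ := by linarith

lemma altPowerSeries_ne_zero_and_re_pos (hm : m ≠ 0) {u : ℂ} (hu : ‖u‖ < 1 / (1 + m - b 2 / 2)) :
    altPowerSeries b u ≠ 0 ∧
      0 < (1 + m * (u * deriv (altPowerSeries b) u / altPowerSeries b u)).re := by
  have hlt := hb.mul_norm_mul_deriv_lt hm hu
  have hF : 0 < ‖altPowerSeries b u‖ := lt_of_le_of_lt (by positivity) hlt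
  have hquot : ‖(m : ℂ) * (u * deriv (altPowerSeries b) u / altPowerSeries b u)‖ < 1 := by
    rwa [norm_mul, norm_div, Complex.norm_natCast, ← mul_div_assoc, div_lt_one hF]
  refine ⟨norm_pos_iff.mp hF, ?_⟩
  rw [Complex.add_re, Complex.one_re]
  linarith [neg_lt_of_abs_lt ((Complex.abs_re_le_norm _).trans_lt hquot)]

lemma re_altPowerSeries_pos {x : ℝ} (hx0 : 0 ≤ x) (hx : x ≤ 2 / 3) :
    0 < (altPowerSeries b x).re := by
  have hF := (Complex.abs_re_le_norm _).trans (hb.norm_altPowerSeries_sub_jet_le (u := x)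
    (by rwa [Complex.norm_of_nonneg hx0]))
  rw [Complex.norm_of_nonneg hx0] at hF
  norm_cast at hF
  rw [Complex.sub_re, Complex.ofReal_re, abs_le] at hF
  have hcubic : b 2 * x ^ 3 ≤ 1 / 6 * (2 / 3) ^ 3 := by
    gcongr
    exact hb.two_le
  have := mul_nonneg (hb.pos 2).le (sq_nonneg x)
  linarith

lemma re_altPowerSeries_add_mul_deriv_le {x : ℝ} (hx0 : 0 ≤ x) (hx : x ≤ 2 / 3) :
    (altPowerSeries b x).re + m * (x * deriv (altPowerSeries b) x).re ≤
      1 - (1 + m) * x + (1 + 2 * m) * b 2 * x ^ 2 + (1 + 3 * m) / 5 * (b 2 * x ^ 3) := by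
  have hxn : ‖(x : ℂ)‖ = x := Complex.norm_of_nonneg hx0
  have hF := (Complex.re_le_norm _).trans (hb.norm_altPowerSeries_sub_jet_le (hxn.trans_le hx))
  have hE := (Complex.re_le_norm _).trans
    (hb.norm_mul_deriv_altPowerSeries_sub_jet_le (hxn.trans_le hx))
  rw [hxn, Complex.sub_re] at hF hE
  have hjetF : (1 - (x : ℂ) + b 2 * x ^ 2).re = 1 - x + b 2 * x ^ 2 := by norm_cast
  have hjetE : (-(x : ℂ) + 2 * b 2 * x ^ 2).re = -x + 2 * b 2 * x ^ 2 := by norm_cast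
  rw [hjetF] at hF
  rw [hjetE] at hE
  have := mul_le_mul_of_nonneg_left hE m.cast_nonneg
  linarith

lemma re_one_add_mul_testPoint_nonpos (hm : m ≠ 0) :
    (1 + m * (testPoint m (b 2) * deriv (altPowerSeries b) (testPoint m (b 2)) /
      altPowerSeries b (testPoint m (b 2)))).re ≤ 0 := by
  have hm1 : (1 : ℝ) ≤ m := mod_cast Nat.one_le_iff_ne_zero.mpr hm
  have hx0 := (testPoint_pos hm1 hb.two_le).le
  have hx1 := testPoint_le hm1 hb.two_le
  have hjet := upper_jet_inequality hm1 (hb.pos 2) hb.two_le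
  generalize testPoint m (b 2) = x at *
  have hFpos := hb.re_altPowerSeries_pos hx0 hx1
  have hFreal : altPowerSeries b x = ((altPowerSeries b x).re : ℝ) :=
    Complex.ext rfl (altPowerSeries_ofReal_im b x)
  have hsum : (altPowerSeries b x).re + m * (x * deriv (altPowerSeries b) x).re ≤ 0 :=
    (hb.re_altPowerSeries_add_mul_deriv_le hx0 hx1).trans hjet
  rw [hFreal, Complex.add_re, Complex.one_re, ← Complex.ofReal_natCast, Complex.re_ofReal_mul,
    Complex.div_ofReal_re, mul_div_assoc', one_add_div hFpos.ne']
  exact div_nonpos_of_nonpos_of_nonneg hsum hFpos.le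

theorem radiusStarlike_bounds (hm : m ≠ 0) {s : ℝ} (hs : 0 < s) :
    1 / ((1 + m) * s) < radiusStarlike 0 (fun z => z * altPowerSeries b (s * z ^ m)) ^ m ∧
      radiusStarlike 0 (fun z => z * altPowerSeries b (s * z ^ m)) ^ m <
        (1 + m) / (s * ((1 + m) ^ 2 - 2 * (1 + 2 * m) * b 2)) := by
  have hm1 : (1 : ℝ) ≤ m := mod_cast Nat.one_le_iff_ne_zero.mpr hm
  have hβ0 := hb.pos 2
  have hβ := hb.two_le
  have hx0 := testPoint_pos hm1 hβ
  have hx := testPoint_le hm1 hβ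
  have hdiff {u : ℂ} (hu : ‖u‖ < 1) := differentiableAt_altPowerSeries hb.summable hu
  have hρ : 1 / (1 + m - b 2 / 2) < 1 := by
    rw [div_lt_one] <;> linarith
  have hxF : altPowerSeries b (testPoint m (b 2)) ≠ 0 := fun h0 => by
    simpa [h0] using hb.re_altPowerSeries_pos hx0.le hx
  obtain ⟨lower, upper⟩ := radiusStarlike_mul_comp_pow_mem_Icc (F := altPowerSeries b) hs hm
    (one_div_pos.mpr (by linarith : 0 < 1 + m - b 2 / 2))
    (fun u hu => ⟨hdiff (hu.trans hρ), hb.altPowerSeries_ne_zero_and_re_pos hm hu⟩) hx0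
    (hdiff (by rw [Complex.norm_of_nonneg hx0.le]; linarith)) hxF
    (hb.re_one_add_mul_testPoint_nonpos hm)
  constructor
  · rw [← div_div, div_lt_iff₀' hs]
    refine lt_of_lt_of_le ?_ lower
    gcongr <;> linarith
  · rw [mul_comm s, ← div_div, lt_div_iff₀' hs]
    exact upper.trans_lt (testPoint_lt hm1 hβ0 hβ)

end IsRapidlyDecaying

section QGamma

variable {q : ℝ}

lemma multipliable_one_sub_mul_pow (hq : |q| < 1) (a : ℝ) :
    Multipliable fun k : ℕ => 1 - a * q ^ k := by
  simpa only [sub_eq_add_neg] using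
    multipliable_one_add_of_summable ((summable_geometric_of_abs_lt_one hq).mul_left a).neg.norm

lemma qPochInf_eq_one_sub_mul (hq : |q| < 1) (a : ℝ) :
    qPochInf a q = (1 - a) * qPochInf (a * q) q := by
  have hshift (k : ℕ) : 1 - a * q ^ (k + 1) = 1 - a * q * q ^ k := by ring
  have hmul : Multipliable fun k : ℕ => 1 - a * q ^ (k + 1) := by
    simpa only [hshift] using multipliable_one_sub_mul_pow hq (a * q)
  have hsplit := tprod_eq_zero_mul' (f := fun k : ℕ => 1 - a * q ^ k) hmul
  simp only [pow_zero, mul_one, hshift] at hsplit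
  exact hsplit

lemma qPochInf_self_ne_zero (hq : |q| < 1) : qPochInf q q ≠ 0 := by
  have hsummable : Summable fun k : ℕ => -(q * q ^ k) :=
    ((summable_geometric_of_abs_lt_one hq).mul_left q).neg
  have hfactor (k : ℕ) : 1 + -(q * q ^ k) ≠ 0 := by
    have hpow : |q ^ (k + 1)| < 1 := by
      rw [abs_pow]
      exact pow_lt_one₀ (abs_nonneg q) hq k.succ_ne_zero
    rw [← pow_succ']
    linarith [lt_of_abs_lt hpow]
  simpa only [qPochInf, sub_eq_add_neg] using
    tprod_one_add_ne_zero_of_summable hfactor hsummable.norm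

lemma qGamma_one (hq : |q| < 1) : qGamma q 1 = 1 := by
  simp [qGamma, qPochInf_self_ne_zero hq]

lemma qGamma_add_one (hq0 : 0 < q) (hq1 : q < 1) {x : ℝ} (hx : x ≠ 0) :
    qGamma q (x + 1) = (1 - q ^ x) / (1 - q) * qGamma q x := by
  have hqx : 1 - q ^ x ≠ 0 :=
    sub_ne_zero.mpr fun h => hx ((Real.rpow_right_inj hq0 hq1.ne).mp (by rw [← h, Real.rpow_zero]))
  have hq : 1 - q ≠ 0 := by linarith
  have hpow : (1 - q) ^ (1 - x) = (1 - q) ^ (1 - (x + 1)) * (1 - q) := by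
    rw [← Real.rpow_add_one hq]
    ring_nf
  unfold qGamma
  rw [qPochInf_eq_one_sub_mul (abs_lt.mpr ⟨by linarith, hq1⟩) (q ^ x), hpow,
    Real.rpow_add_one hq0.ne']
  field_simp

lemma qGamma_natCast_add_one (hq0 : 0 < q) (hq1 : q < 1) {n : ℕ} (hn : n ≠ 0) :
    qGamma q (n + 1) = (∑ i ∈ range n, q ^ i) * qGamma q n := by
  rw [qGamma_add_one hq0 hq1 (mod_cast hn), Real.rpow_natCast, geom_sum_eq hq1.ne,
    ← neg_div_neg_eq, neg_sub, neg_sub]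

end QGamma

section Coefficients

variable {q : ℝ}

/-- AM–GM, applied to the pairs of terms with exponents `i` and `n - i`. -/
lemma mul_pow_le_geom_sum_sq {t : ℝ} (n : ℕ) :
    (n + 1) * t ^ n ≤ ∑ i ∈ range (n + 1), (t ^ 2) ^ i := by
  have hpair (i : ℕ) (hi : i ∈ range (n + 1)) : 2 * t ^ n ≤ (t ^ 2) ^ i + (t ^ 2) ^ (n - i) := by
    have hn : t ^ n = t ^ i * t ^ (n - i) := by
      rw [← pow_add, Nat.add_sub_cancel' (Nat.lt_succ_iff.mp (mem_range.mp hi))]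
    rw [hn, pow_right_comm, pow_right_comm t 2, ← mul_assoc]
    exact two_mul_le_add_sq _ _
  have hreflect : ∑ i ∈ range (n + 1), (t ^ 2) ^ (n - i) = ∑ i ∈ range (n + 1), (t ^ 2) ^ i := by
    simpa using sum_range_reflect (fun i => (t ^ 2) ^ i) (n + 1)
  have hsum := sum_le_sum hpair
  rw [sum_add_distrib, hreflect, sum_const, card_range, nsmul_eq_mul] at hsum
  push_cast at hsum
  linarith

/-- The coefficients of `λ_{0,σ}`, with the sign removed and rescaled so that the first two are
`1`: substituting `σ² z² / (1 + q)` for the variable recovers the series. -/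
noncomputable def qMLCoeff (q : ℝ) (n : ℕ) : ℝ :=
  q ^ (n * (n - 1)) / qGamma q (2 * n + 1) * (1 + q) ^ n

lemma qMLCoeff_zero (hq : |q| < 1) : qMLCoeff q 0 = 1 := by
  simp [qMLCoeff, qGamma_one hq]

lemma qMLCoeff_succ (hq0 : 0 < q) (hq1 : q < 1) (n : ℕ) :
    qMLCoeff q (n + 1) = q ^ (2 * n) /
      ((∑ i ∈ range (2 * n + 1), q ^ i) * ∑ i ∈ range (n + 1), (q ^ 2) ^ i) * qMLCoeff q n := by
  have hfactor : ∑ i ∈ range (2 * n + 2), q ^ i =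
      (1 + q) * ∑ i ∈ range (n + 1), (q ^ 2) ^ i := by
    refine mul_left_cancel₀ (sub_ne_zero.mpr hq1.ne') ?_
    linear_combination mul_neg_geom_sum q (2 * n + 2) - mul_neg_geom_sum (q ^ 2) (n + 1)
  have hgamma : qGamma q (2 * (n + 1 : ℕ) + 1) =
      (1 + q) * (∑ i ∈ range (n + 1), (q ^ 2) ^ i) *
        ((∑ i ∈ range (2 * n + 1), q ^ i) * qGamma q (2 * n + 1)) := by
    have h1 := qGamma_natCast_add_one hq0 hq1 (2 * n).succ_ne_zero
    have h2 := qGamma_natCast_add_one hq0 hq1 (2 * n + 1).succ_ne_zero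
    push_cast at h1 h2 ⊢
    rw [← hfactor, ← h1, ← h2]
    ring_nf
  have hexp : (n + 1) * (n + 1 - 1) = 2 * n + n * (n - 1) := by
    rcases n with _ | n
    · rfl
    · simp only [Nat.add_sub_cancel]
      ring
  have hq : 1 + q ≠ 0 := by positivity
  rw [qMLCoeff, qMLCoeff, hgamma, hexp, pow_add, pow_succ (1 + q)]
  field_simp

lemma qMLCoeff_ratio_le (hq : 0 < q) (n : ℕ) :
    q ^ (2 * n) / ((∑ i ∈ range (2 * n + 1), q ^ i) * ∑ i ∈ range (n + 1), (q ^ 2) ^ i) ≤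
      1 / ((2 * n + 1) * (n + 1)) := by
  have hodd : (2 * n + 1) * q ^ n ≤ ∑ i ∈ range (2 * n + 1), q ^ i := by
    simpa [pow_mul, Real.sq_sqrt hq.le] using mul_pow_le_geom_sum_sq (t := √q) (2 * n)
  have heven := mul_pow_le_geom_sum_sq (t := q) n
  rw [div_le_div_iff₀ (mul_pos (geom_sum_pos hq.le (by simp)) (geom_sum_pos (by positivity)
    (by simp))) (by positivity)]
  calc q ^ (2 * n) * ((2 * n + 1) * (n + 1)) = (2 * n + 1) * q ^ n * ((n + 1) * q ^ n) := by ring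
    _ ≤ (∑ i ∈ range (2 * n + 1), q ^ i) * ∑ i ∈ range (n + 1), (q ^ 2) ^ i := by gcongr
    _ = _ := by ring

lemma qMLCoeff_pos (hq0 : 0 < q) (hq1 : q < 1) (n : ℕ) : 0 < qMLCoeff q n := by
  induction n with
  | zero => simp [qMLCoeff_zero (abs_lt.mpr ⟨by linarith, hq1⟩)]
  | succ n ih =>
    have hodd := geom_sum_pos hq0.le (2 * n).succ_ne_zero
    have heven := geom_sum_pos (sq_nonneg q) n.succ_ne_zero
    rw [qMLCoeff_succ hq0 hq1]
    exact mul_pos (div_pos (by positivity) (mul_pos hodd heven)) ih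

lemma qMLCoeff_one (hq0 : 0 < q) (hq1 : q < 1) : qMLCoeff q 1 = 1 := by
  simp [qMLCoeff_succ hq0 hq1, qMLCoeff_zero (abs_lt.mpr ⟨by linarith, hq1⟩)]

lemma qMLCoeff_two (hq0 : 0 < q) (hq1 : q < 1) :
    qMLCoeff q 2 = q ^ 2 / ((1 + q + q ^ 2) * (1 + q ^ 2)) := by
  simp [qMLCoeff_succ hq0 hq1 1, qMLCoeff_one hq0 hq1, sum_range_succ]

lemma isRapidlyDecaying_qMLCoeff (hq0 : 0 < q) (hq1 : q < 1) : IsRapidlyDecaying (qMLCoeff q) where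
  zero := qMLCoeff_zero (abs_lt.mpr ⟨by linarith, hq1⟩)
  one := qMLCoeff_one hq0 hq1
  pos := qMLCoeff_pos hq0 hq1
  succ_le n hn := by
    have hn' : (1 : ℝ) ≤ n := mod_cast hn
    have hratio : 1 / ((2 * n + 1) * (n + 1)) ≤ (1 / 6 : ℝ) := by
      gcongr
      nlinarith
    rw [qMLCoeff_succ hq0 hq1]
    calc _ ≤ 1 / 6 * qMLCoeff q n :=
          mul_le_mul_of_nonneg_right ((qMLCoeff_ratio_le hq0 n).trans hratio)
            (qMLCoeff_pos hq0 hq1 n).le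
      _ = qMLCoeff q n / 6 := by ring

lemma altPowerSeries_qMLCoeff (hq : 1 + q ≠ 0) (σ : ℝ) (w : ℂ) :
    altPowerSeries (qMLCoeff q) ((σ ^ 2 / (1 + q) : ℝ) * w) =
      ∑' n : ℕ, (((-1) ^ n * σ ^ (2 * n) * q ^ (n * (n - 1)) / qGamma q (2 * n + 1) : ℝ) : ℂ) *
        w ^ n := by
  refine tsum_congr fun n => ?_
  rw [mul_pow, ← mul_assoc, ← Complex.ofReal_pow, ← Complex.ofReal_mul, qMLCoeff, div_pow,
    ← pow_mul]
  congr 2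
  field_simp

theorem radiusStarlike_altPowerSeries_qMLCoeff_bounds (hq0 : 0 < q) (hq1 : q < 1) {σ : ℝ}
    (hσ : σ ≠ 0) {m : ℕ} (hm : m ≠ 0) :
    (1 + q) / ((1 + m) * σ ^ 2) <
        radiusStarlike 0
          (fun z => z * altPowerSeries (qMLCoeff q) ((σ ^ 2 / (1 + q) : ℝ) * z ^ m)) ^ m ∧
      radiusStarlike 0
          (fun z => z * altPowerSeries (qMLCoeff q) ((σ ^ 2 / (1 + q) : ℝ) * z ^ m)) ^ m <
        (1 + m) * (1 + q) * (1 + q ^ 2) * (1 + q + q ^ 2) /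
          (σ ^ 2 * ((1 + m) ^ 2 * ((1 + q ^ 2) * (1 + q + q ^ 2)) - 2 * (1 + 2 * m) * q ^ 2)) := by
  have hbounds := (isRapidlyDecaying_qMLCoeff hq0 hq1).radiusStarlike_bounds hm
    (by positivity : 0 < σ ^ 2 / (1 + q))
  have hdenom : (1 + m) ^ 2 - 2 * (1 + 2 * m) * qMLCoeff q 2 =
      ((1 + m) ^ 2 * ((1 + q ^ 2) * (1 + q + q ^ 2)) - 2 * (1 + 2 * m) * q ^ 2) /
        ((1 + q ^ 2) * (1 + q + q ^ 2)) := by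
    rw [qMLCoeff_two hq0 hq1]
    field_simp
  rw [hdenom] at hbounds
  convert hbounds using 2
  · field_simp
  · rw [div_mul_div_comm, div_div_eq_mul_div]
    ring_nf

lemma gML0_eq (hq : 1 + q ≠ 0) (σ : ℝ) :
    gML0 σ q = fun z => z * altPowerSeries (qMLCoeff q) ((σ ^ 2 / (1 + q) : ℝ) * z ^ 2) := by
  funext z
  simp only [altPowerSeries_qMLCoeff hq, gML0, qML, add_zero, pow_mul z]

lemma hML0_eq (hq : 1 + q ≠ 0) (σ : ℝ) :
    hML0 σ q = fun z => z * altPowerSeries (qMLCoeff q) ((σ ^ 2 / (1 + q) : ℝ) * z ^ 1) := by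
  funext z
  simp only [altPowerSeries_qMLCoeff hq, hML0, pow_one]

end Coefficients

theorem stmt18 (q σ : ℝ) (hq0 : 0 < q) (hq1 : q < 1) (hσ : 0 < σ) :
    ((1 + q) / (3 * σ ^ 2) < radiusStarlike 0 (gML0 σ q) ^ 2 ∧
      radiusStarlike 0 (gML0 σ q) ^ 2 <
        3 * (1 + q) * (1 + q ^ 2) * (1 + q + q ^ 2) /
          (σ ^ 2 * (9 * q ^ 4 + 9 * q ^ 3 + 8 * q ^ 2 + 9 * q + 9))) ∧
    ((1 + q) / (2 * σ ^ 2) < radiusStarlike 0 (hML0 σ q) ∧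
      radiusStarlike 0 (hML0 σ q) <
        (1 + q) * (1 + q ^ 2) * (1 + q + q ^ 2) /
          (σ ^ 2 * (2 * q ^ 4 + 2 * q ^ 3 + q ^ 2 + 2 * q + 2))) := by
  have hq : 1 + q ≠ 0 := by positivity
  rw [gML0_eq hq, hML0_eq hq]
  have hg := radiusStarlike_altPowerSeries_qMLCoeff_bounds hq0 hq1 hσ.ne' two_ne_zero
  have hh := radiusStarlike_altPowerSeries_qMLCoeff_bounds hq0 hq1 hσ.ne' one_ne_zero
  rw [pow_one] at hh
  convert And.intro hg hh using 3
  · norm_num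
  · push_cast
    ring_nf
  · norm_num
  · push_cast
    rw [← mul_div_mul_left _ _ (two_ne_zero (α := ℝ))]
    ring_nf
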